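/- arXiv:1503.00682 — 4 statements merged into one kernel-verified Lean document; each statement's English description precedes it below -/
import Mathlib

section
/- Let w₀ : [0,∞) → ℝ be continuously differentiable with w₀ and w₀′ bounded, w₀(0) = 0, and w₀′(s) < 0 for all s ≥ 0. For t > 0 and y ≥ 0 define w(t,y) := (1/(2√(πt))) ∫₀^∞ ( exp(−(y−s)²/(4t)) − exp(−(y+s)²/(4t)) ) w₀(s) ds. Then for every t > 0 the function y ↦ w(t,y) is differentiable on [0,∞) and ∂_y w(t,y) < 0 for every t > 0 and every y ≥ 0. -/
open MeasureTheory

/-!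
Extend `w₀` to an odd function `W` on `ℝ`. The Dirichlet representation is then the convolution of
`W` with the Gaussian `g`, and since `g (y - s) = g y * exp (y s / 2t) * g s`, it is `g` times a
two-sided Laplace transform, so that it may be differentiated under the integral sign. Its
derivative is `∫ g' (y - s) W s ds = ∫ g' (y - s) (W s - W y) ds` because the odd function `g'` has
integral zero. The last integrand is negative off `s = y`, as `g'` has the sign of `s - y` and `W`
is strictly decreasing.
-/

section LaplaceTransform

variable {α E : Type*} {mα : MeasurableSpace α} {μ : Measure α}
  [NormedAddCommGroup E] [NormedSpace ℝ E]

theorem abs_mul_exp_mul_le {a b : ℝ} (hab : |b - a| ≤ 1) (x : ℝ) :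
    |x| * Real.exp (b * x) ≤ Real.exp ((a + 2) * x) + Real.exp ((a - 2) * x) := by
  have hx : |x| ≤ Real.exp |x| := by linarith [Real.add_one_le_exp |x|]
  have hbx : b * x ≤ a * x + |x| := by
    have := (le_abs_self ((b - a) * x)).trans_eq (abs_mul _ _)
    nlinarith [abs_nonneg x]
  calc |x| * Real.exp (b * x)
      ≤ Real.exp |x| * Real.exp (a * x + |x|) := by gcongr
    _ = Real.exp (a * x) * Real.exp |2 * x| := by
        rw [← Real.exp_add, ← Real.exp_add, abs_mul, abs_two]; ring_nf
    _ ≤ Real.exp (a * x) * (Real.exp (2 * x) + Real.exp (-(2 * x))) := by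
        gcongr; exact Real.exp_abs_le _
    _ = Real.exp ((a + 2) * x) + Real.exp ((a - 2) * x) := by
        rw [mul_add, ← Real.exp_add, ← Real.exp_add]; ring_nf

theorem hasDerivAt_integral_exp_mul_smul {X : α → ℝ} {f : α → E} (hX : AEStronglyMeasurable X μ)
    (hf : ∀ a : ℝ, Integrable (fun x ↦ Real.exp (a * X x) • f x) μ) (a : ℝ) :
    Integrable (fun x ↦ X x • Real.exp (a * X x) • f x) μ ∧
      HasDerivAt (fun a : ℝ ↦ ∫ x, Real.exp (a * X x) • f x ∂μ)
        (∫ x, X x • Real.exp (a * X x) • f x ∂μ) a := by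
  refine hasDerivAt_integral_of_dominated_loc_of_deriv_le
    (F := fun b x ↦ Real.exp (b * X x) • f x) (F' := fun b x ↦ X x • Real.exp (b * X x) • f x)
    (bound := fun x ↦ ‖Real.exp ((a + 2) * X x) • f x‖ + ‖Real.exp ((a - 2) * X x) • f x‖)
    (Metric.closedBall_mem_nhds a one_pos) (.of_forall fun b ↦ (hf b).aestronglyMeasurable) (hf a)
    (hX.smul (hf a).aestronglyMeasurable) (.of_forall fun x b hb ↦ ?_)
    ((hf _).norm.add (hf _).norm) (.of_forall fun x b _ ↦ ?_)
  · simp only [norm_smul, Real.norm_eq_abs, Real.abs_exp, ← mul_assoc, ← add_mul]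
    gcongr
    exact abs_mul_exp_mul_le (by simpa [Real.dist_eq] using hb) (X x)
  · have h := (((hasDerivAt_id b).mul_const (X x)).exp).smul_const (f x)
    simpa [smul_smul, mul_comm] using h

end LaplaceTransform

/-- The heat kernel on `ℝ` at time `t`, without its normalizing factor `1 / (2√(πt))`. -/
noncomputable def gaussianKernel (t x : ℝ) : ℝ := Real.exp (-x ^ 2 / (4 * t))

/-- The derivative of `gaussianKernel t`, see `hasDerivAt_gaussianKernel`. -/
noncomputable def gaussianKernelDeriv (t x : ℝ) : ℝ := -x / (2 * t) * gaussianKernel t x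

section GaussianKernel

variable {E : Type*} [NormedAddCommGroup E] [NormedSpace ℝ E] {t : ℝ}

theorem gaussianKernel_pos (t x : ℝ) : 0 < gaussianKernel t x := Real.exp_pos _

theorem gaussianKernel_neg (t x : ℝ) : gaussianKernel t (-x) = gaussianKernel t x := by
  simp [gaussianKernel]

theorem gaussianKernel_sub (t y s : ℝ) : gaussianKernel t (y - s) =
    gaussianKernel t y * (Real.exp (y / (2 * t) * s) * gaussianKernel t s) := by
  simp only [gaussianKernel, ← Real.exp_add]
  ring_nf

theorem hasDerivAt_gaussianKernel (t x : ℝ) :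
    HasDerivAt (gaussianKernel t) (gaussianKernelDeriv t x) x := by
  refine ((hasDerivAt_pow 2 x).fun_neg.div_const (4 * t)).exp.congr_deriv ?_
  simp only [gaussianKernelDeriv, gaussianKernel]
  ring

theorem integrable_gaussianKernel (ht : 0 < t) : Integrable (gaussianKernel t) := by
  refine (integrable_exp_neg_mul_sq (b := 1 / (4 * t)) (by positivity)).congr
    (.of_forall fun x ↦ ?_)
  simp only [gaussianKernel]
  ring_nf

theorem odd_gaussianKernelDeriv (t : ℝ) : Function.Odd (gaussianKernelDeriv t) := fun x ↦ by
  simp only [gaussianKernelDeriv, gaussianKernel_neg]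
  ring

theorem gaussianKernelDeriv_neg_of_pos (ht : 0 < t) {x : ℝ} (hx : 0 < x) :
    gaussianKernelDeriv t x < 0 :=
  mul_neg_of_neg_of_pos (div_neg_of_neg_of_pos (neg_lt_zero.2 hx) (by positivity))
    (gaussianKernel_pos t x)

theorem integrable_gaussianKernelDeriv (ht : 0 < t) : Integrable (gaussianKernelDeriv t) := by
  refine ((integrable_mul_exp_neg_mul_sq (b := 1 / (4 * t)) (by positivity)).const_mul
    (-1 / (2 * t))).congr (.of_forall fun x ↦ ?_)
  simp only [gaussianKernelDeriv, gaussianKernel]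
  ring_nf

theorem hasDerivAt_integral_gaussianKernel_sub_smul {μ : Measure ℝ} {f : ℝ → E} (ht : t ≠ 0)
    (hf : ∀ y, Integrable (fun s ↦ gaussianKernel t (y - s) • f s) μ) (y : ℝ) :
    Integrable (fun s ↦ gaussianKernelDeriv t (y - s) • f s) μ ∧
      HasDerivAt (fun y ↦ ∫ s, gaussianKernel t (y - s) • f s ∂μ)
        (∫ s, gaussianKernelDeriv t (y - s) • f s ∂μ) y := by
  have hfactor (y s : ℝ) : gaussianKernel t (y - s) • f s =
      gaussianKernel t y • Real.exp (y / (2 * t) * s) • gaussianKernel t s • f s := by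
    simp only [gaussianKernel_sub, smul_smul]
  have hfactor_deriv (s : ℝ) : gaussianKernelDeriv t (y - s) • f s =
      gaussianKernelDeriv t y • Real.exp (y / (2 * t) * s) • gaussianKernel t s • f s +
        (gaussianKernel t y / (2 * t)) •
          s • Real.exp (y / (2 * t) * s) • gaussianKernel t s • f s := by
    simp only [gaussianKernelDeriv, gaussianKernel_sub, smul_smul, ← add_smul]
    ring_nf
  have hint (a : ℝ) : Integrable (fun s ↦ Real.exp (a * s) • gaussianKernel t s • f s) μ := by
    have h := hf (2 * t * a)
    simp only [hfactor] at h
    rwa [integrable_fun_smul_iff (gaussianKernel_pos t _).ne',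
      mul_div_cancel_left₀ a (by positivity)] at h
  obtain ⟨hint', hderiv⟩ :=
    hasDerivAt_integral_exp_mul_smul (X := id) aestronglyMeasurable_id hint (y / (2 * t))
  simp only [id] at hint' hderiv
  have hleft := (hint (y / (2 * t))).fun_smul (gaussianKernelDeriv t y)
  have hright := hint'.fun_smul (gaussianKernel t y / (2 * t))
  simp only [hfactor, hfactor_deriv, integral_smul]
  refine ⟨hleft.add hright, ?_⟩
  rw [integral_add hleft hright, integral_smul, integral_smul]
  refine ((hasDerivAt_gaussianKernel t y).smul
    (hderiv.scomp y ((hasDerivAt_id y).div_const (2 * t)))).congr_deriv ?_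
  simp only [Function.comp_def, id]
  module

end GaussianKernel

section OddExtension

/-- The extension of the restriction of `f` to `(0, ∞)` to an odd function on `ℝ`;
it vanishes at `0` whatever the value of `f` there. -/
noncomputable def oddExtension (f : ℝ → ℝ) (x : ℝ) : ℝ := SignType.sign x * f |x|

theorem odd_oddExtension (f : ℝ → ℝ) : Function.Odd (oddExtension f) := fun x ↦ by
  simp [oddExtension, Left.sign_neg]

theorem oddExtension_of_pos (f : ℝ → ℝ) {x : ℝ} (hx : 0 < x) : oddExtension f x = f x := by
  simp [oddExtension, hx, abs_of_pos]

theorem strictAnti_oddExtension {f : ℝ → ℝ} (hf : StrictAntiOn f (Set.Ici 0)) (hf0 : f 0 ≤ 0) :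
    StrictAnti (oddExtension f) := by
  refine strictAnti_of_odd_strictAntiOn_nonneg (odd_oddExtension f) fun x hx y hy hxy ↦ ?_
  rw [oddExtension_of_pos f (hx.trans_lt hxy)]
  rcases (Set.mem_Ici.1 hx).eq_or_lt with rfl | hx_pos
  · rw [(odd_oddExtension f).map_zero]
    exact (hf hx hy hxy).trans_le hf0
  · rw [oddExtension_of_pos f hx_pos]
    exact hf hx hy hxy

end OddExtension

section Reflection

variable {E : Type*} [NormedAddCommGroup E] {f : ℝ → E}

theorem integrable_of_integrableOn_Ioi_comp_neg (hf : IntegrableOn f (Set.Ioi 0))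
    (hf_neg : IntegrableOn (fun x ↦ f (-x)) (Set.Ioi 0)) : Integrable f := by
  have hIio : IntegrableOn f (Set.Iio 0) := by
    simpa using hf_neg.comp_neg
  rw [← integrableOn_univ, ← Set.Iic_union_Ioi (a := (0 : ℝ))]
  exact (integrableOn_Iic_iff_integrableOn_Iio (by finiteness) |>.2 hIio).union hf

theorem integral_eq_integral_Ioi_add_comp_neg [NormedSpace ℝ E] (hf : Integrable f) :
    ∫ x, f x = ∫ x in Set.Ioi (0 : ℝ), (f x + f (-x)) := by
  have hneg := integral_comp_neg_Ioi (0 : ℝ) f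
  rw [neg_zero] at hneg
  rw [integral_add hf.integrableOn hf.comp_neg.integrableOn, hneg, add_comm,
    intervalIntegral.integral_Iic_add_Ioi hf.integrableOn hf.integrableOn]

theorem integral_eq_zero_of_odd {G : Type*} [AddGroup G] [MeasurableSpace G] [MeasurableNeg G]
    {μ : Measure G} [μ.IsNegInvariant] [NormedSpace ℝ E] {f : G → E} (hf : Function.Odd f) :
    ∫ x, f x ∂μ = 0 := by
  have : IsAddTorsionFree E := .of_isTorsionFree ℝ E
  rw [← self_eq_neg, ← integral_neg]
  simp_rw [← hf _]
  exact (integral_neg_eq_self f μ).symm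

theorem integral_comp_sub_mul_neg_of_odd_of_strictAnti {φ W : ℝ → ℝ} (hφ : Function.Odd φ)
    (hφ_neg : ∀ x, 0 < x → φ x < 0) (hφ_int : Integrable φ) (hW : StrictAnti W) {y : ℝ}
    (hφW : Integrable fun s ↦ φ (y - s) * W s) : ∫ s, φ (y - s) * W s < 0 := by
  have hφy : Integrable fun s ↦ φ (y - s) * W y := (hφ_int.comp_sub_left y).mul_const (W y)
  have hrecenter : ∫ s, φ (y - s) * (W y - W s) = -∫ s, φ (y - s) * W s := by
    simp only [mul_sub]
    rw [integral_sub hφy hφW, integral_mul_const, integral_sub_left_eq_self φ volume y,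
      integral_eq_zero_of_odd hφ, zero_mul, zero_sub]
  have hpos (s : ℝ) (hs : s ≠ y) : 0 < φ (y - s) * (W y - W s) := by
    rcases hs.lt_or_gt with hsy | hys
    · exact mul_pos_of_neg_of_neg (hφ_neg _ (sub_pos.2 hsy)) (sub_neg.2 (hW hsy))
    · have hφs : 0 < φ (y - s) := by
        rw [← neg_sub s y, hφ]
        exact neg_pos.2 (hφ_neg _ (sub_pos.2 hys))
      exact mul_pos hφs (sub_pos.2 (hW hys))
  have hnonneg : 0 ≤ fun s ↦ φ (y - s) * (W y - W s) := fun s ↦ by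
    rcases eq_or_ne s y with rfl | hs
    · simp
    · exact (hpos s hs).le
  have hint : Integrable fun s ↦ φ (y - s) * (W y - W s) := by
    simp only [mul_sub]
    exact hφy.sub hφW
  rw [← neg_pos, ← hrecenter, integral_pos_iff_support_of_nonneg hnonneg hint]
  calc (0 : ENNReal) < volume (Set.Ioi y) := by simp
    _ ≤ _ := measure_mono fun s hs ↦ (hpos s (ne_of_gt hs)).ne'

end Reflection

section DirichletHeat

/-- The solution at time `t` of the heat equation on `[0, ∞)` with initial value `w₀` and boundary
value `0`, obtained by reflecting the heat kernel at the origin. -/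
noncomputable def dirichletHeat (w₀ : ℝ → ℝ) (t y : ℝ) : ℝ :=
  1 / (2 * Real.sqrt (Real.pi * t)) *
    ∫ s in Set.Ioi (0 : ℝ), (gaussianKernel t (y - s) - gaussianKernel t (y + s)) * w₀ s

variable {w₀ : ℝ → ℝ} {t : ℝ}

theorem integrable_gaussianKernel_sub_mul_oddExtension
    (hw₀ : ∀ y, IntegrableOn (fun s ↦ gaussianKernel t (y - s) * w₀ s) (Set.Ioi 0)) (y : ℝ) :
    Integrable fun s ↦ gaussianKernel t (y - s) * oddExtension w₀ s := by
  refine integrable_of_integrableOn_Ioi_comp_neg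
    ((hw₀ y).congr_fun (fun s hs ↦ ?_) measurableSet_Ioi)
    ((hw₀ (-y)).neg.congr_fun (fun s hs ↦ ?_) measurableSet_Ioi)
  · simp only [oddExtension_of_pos w₀ hs]
  · simp only [Pi.neg_apply, odd_oddExtension w₀ s, oddExtension_of_pos w₀ hs, mul_neg]
    rw [← gaussianKernel_neg t (y - -s)]
    ring_nf

theorem dirichletHeat_eq_integral_oddExtension
    (hw₀ : ∀ y, IntegrableOn (fun s ↦ gaussianKernel t (y - s) * w₀ s) (Set.Ioi 0)) (y : ℝ) :
    dirichletHeat w₀ t y = 1 / (2 * Real.sqrt (Real.pi * t)) *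
      ∫ s, gaussianKernel t (y - s) * oddExtension w₀ s := by
  rw [dirichletHeat, integral_eq_integral_Ioi_add_comp_neg
    (integrable_gaussianKernel_sub_mul_oddExtension hw₀ y)]
  congr 1
  refine setIntegral_congr_fun measurableSet_Ioi fun s hs ↦ ?_
  simp only [odd_oddExtension w₀ s, oddExtension_of_pos w₀ hs, sub_neg_eq_add]
  ring

theorem integrableOn_gaussianKernel_sub_mul_of_bounded {M : ℝ} (ht : 0 < t)
    (hw₀ : AEStronglyMeasurable w₀ (volume.restrict (Set.Ioi 0)))
    (hM : ∀ s, 0 < s → |w₀ s| ≤ M) (y : ℝ) :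
    IntegrableOn (fun s ↦ gaussianKernel t (y - s) * w₀ s) (Set.Ioi 0) :=
  ((integrable_gaussianKernel ht).comp_sub_left y).integrableOn.mul_bdd hw₀
    (ae_restrict_of_forall_mem measurableSet_Ioi hM)

theorem halfline_heat_representation_deriv_negative_general (ht : 0 < t)
    (hanti : StrictAntiOn w₀ (Set.Ici 0)) (hzero : w₀ 0 ≤ 0)
    (hint : ∀ y, IntegrableOn (fun s ↦ gaussianKernel t (y - s) * w₀ s) (Set.Ioi 0)) (y : ℝ) :
    DifferentiableAt ℝ (dirichletHeat w₀ t) y ∧ deriv (dirichletHeat w₀ t) y < 0 := by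
  obtain ⟨hint_deriv, hderiv⟩ := hasDerivAt_integral_gaussianKernel_sub_smul ht.ne'
    (integrable_gaussianKernel_sub_mul_oddExtension hint) y
  have hheat := hderiv.const_mul (1 / (2 * Real.sqrt (Real.pi * t)))
  simp only [smul_eq_mul, ← dirichletHeat_eq_integral_oddExtension hint] at hheat
  refine ⟨hheat.differentiableAt, ?_⟩
  rw [hheat.deriv]
  exact mul_neg_of_pos_of_neg (by positivity) <|
    integral_comp_sub_mul_neg_of_odd_of_strictAnti (odd_gaussianKernelDeriv t)
      (fun _ ↦ gaussianKernelDeriv_neg_of_pos ht) (integrable_gaussianKernelDeriv ht)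
      (strictAnti_oddExtension hanti hzero) hint_deriv

end DirichletHeat

/-- If `w₀` is continuously differentiable on `[0,∞)` with `w₀` and `w₀′`
bounded, `w₀(0) = 0` and `w₀′ < 0` on `[0,∞)`, then the half-line Dirichlet heat
representation `w(t,·)` is differentiable on `[0,∞)` with `∂_y w(t,y) < 0` for every
`t > 0` and every `y ≥ 0`. -/
theorem halfline_heat_representation_deriv_negative
    (w₀ w₀' : ℝ → ℝ)
    (hderiv : ∀ s ∈ Set.Ici (0:ℝ), HasDerivWithinAt w₀ (w₀' s) (Set.Ici 0) s)
    (hderivcont : ContinuousOn w₀' (Set.Ici 0))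
    (hbdd : ∃ M : ℝ, ∀ s : ℝ, 0 ≤ s → |w₀ s| ≤ M ∧ |w₀' s| ≤ M)
    (hzero : w₀ 0 = 0)
    (hneg : ∀ s : ℝ, 0 ≤ s → w₀' s < 0)
    (w : ℝ → ℝ → ℝ)
    (hw : ∀ t y : ℝ, w t y = (1 / (2 * Real.sqrt (Real.pi * t))) *
      ∫ s in Set.Ioi (0:ℝ),
        (Real.exp (-(y - s)^2 / (4 * t)) - Real.exp (-(y + s)^2 / (4 * t))) * w₀ s) :
    ∀ t : ℝ, 0 < t → ∀ y : ℝ, 0 ≤ y →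
      DifferentiableWithinAt ℝ (fun z => w t z) (Set.Ici 0) y ∧
      derivWithin (fun z => w t z) (Set.Ici 0) y < 0 := by
  obtain ⟨M, hM⟩ := hbdd
  intro t ht y hy
  have hcont : ContinuousOn w₀ (Set.Ici 0) := fun s hs ↦ (hderiv s hs).continuousWithinAt
  have hanti : StrictAntiOn w₀ (Set.Ici 0) :=
    strictAntiOn_of_hasDerivWithinAt_neg (convex_Ici 0) hcont
      (fun s hs ↦ (hderiv s (interior_subset hs)).mono interior_subset)
      fun s hs ↦ hneg s (interior_subset hs)
  have hmeas : AEStronglyMeasurable w₀ (volume.restrict (Set.Ioi 0)) :=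
    (hcont.mono Set.Ioi_subset_Ici_self).aestronglyMeasurable measurableSet_Ioi
  obtain rfl : w = dirichletHeat w₀ := funext₂ hw
  obtain ⟨hdiff, hderiv_neg⟩ := halfline_heat_representation_deriv_negative_general ht hanti
    hzero.le (integrableOn_gaussianKernel_sub_mul_of_bounded ht hmeas fun s hs ↦ (hM s hs.le).1) y
  exact ⟨hdiff.differentiableWithinAt,
    (hdiff.derivWithin (uniqueDiffOn_Ici 0 y hy)).trans_lt hderiv_neg⟩
end

section
/- Let β > 0 and let w : [0,∞) → ℝ be continuously differentiable with −β ≤ w(y) ≤ 0 and w′(y) < 0 for all y ≥ 0. Define u(y) := −e^{βy} ∫_y^∞ e^{−βs} w(s) ds. Then u is twice differentiable, u′(y) > 0 for every y ≥ 0, and u″(y) − β u′(y) = w′(y) < 0 for every y ≥ 0; consequently u″(y)/u′(y) < β for every y ≥ 0. -/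
open MeasureTheory

/-!
Put `v = β u + w`. Differentiating the formula for `u` gives `u' = v` and `v' = β v + w'`, so
`H = e^{-βy} u'` satisfies `H' = e^{-βy} w' < 0` and is strictly decreasing. Moreover
`H(y) = e^{-βy} w(y) - β ∫_y^∞ e^{-βs} w(s) ds` differs from an integrable function by a tail
integral, which tends to `0`. A decreasing function that took a nonpositive value would eventually
stay below a negative constant, which no integrable function does; hence `H > 0`.
-/

open Set Filter Topology

section TailIntegral

theorem hasDerivWithinAt_setIntegral_Ioi {E : Type*} [NormedAddCommGroup E] [NormedSpace ℝ E]
    [CompleteSpace E] {f : ℝ → E} {a y : ℝ} (h_int : IntegrableOn f (Ioi a)) (hy : y ∈ Ici a)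
    (hcont : ContinuousWithinAt f (Ici a) y) :
    HasDerivWithinAt (fun x => ∫ s in Ioi x, f s) (-f y) (Ici a) y := by
  have h_int_Ici : IntegrableOn f (Ici a) :=
    (integrableOn_Ici_iff_integrableOn_Ioi (by simp)).2 h_int
  have hIcc : Icc a (y + 1) ∈ 𝓝[Ici a] y :=
    inter_mem_nhdsWithin (Ici a) (Iic_mem_nhds (lt_add_one y))
  -- `FTCFilter` has an instance for `𝓝[Icc a b] y`, but none for `𝓝[Ici a] y`.
  have : Fact (y ∈ Icc a (y + 1)) := ⟨hy, (lt_add_one y).le⟩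
  have hprimitive : HasDerivWithinAt (fun x => ∫ s in a..x, f s) (f y) (Icc a (y + 1)) y :=
    intervalIntegral.integral_hasDerivWithinAt_right
      ((intervalIntegrable_iff_integrableOn_Ioc_of_le hy).2 (h_int.mono_set Ioc_subset_Ioi_self))
      ⟨_, self_mem_nhdsWithin, (h_int_Ici.mono_set Icc_subset_Ici_self).aestronglyMeasurable⟩
      (hcont.mono Icc_subset_Ici_self)
  have htail : ∀ x ∈ Ici a, ∫ s in Ioi x, f s = (∫ s in Ioi a, f s) - ∫ s in a..x, f s :=
    fun x hx => by rw [← intervalIntegral.integral_Ioi_sub_Ioi h_int hx, sub_sub_cancel]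
  exact ((hprimitive.mono_of_mem_nhdsWithin hIcc).const_sub _).congr htail (htail y hy)

theorem nonneg_of_eventually_le_of_integrableAtFilter {α : Type*} [MeasurableSpace α]
    {μ : Measure α} {l : Filter α} {f : α → ℝ} {c : ℝ} (hf : IntegrableAtFilter f l μ)
    (hl : ∀ s ∈ l, μ s = ⊤) (hc : ∀ᶠ x in l, f x ≤ c) : 0 ≤ c := by
  by_contra! hneg
  obtain ⟨s, hs, h_int⟩ := hf
  have hlt : μ ({x | f x ≤ c} ∩ s) < ⊤ :=
    (Measure.le_restrict_apply s _).trans_lt (h_int.measure_le_lt_top hneg)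
  exact hlt.ne (hl _ (inter_mem hc hs))

theorem pos_of_strictAntiOn_of_tendsto_sub_integrable {f g : ℝ → ℝ} {a : ℝ}
    (hf : StrictAntiOn f (Ici a)) (hg : IntegrableAtFilter g atTop)
    (hfg : Tendsto (fun s => f s - g s) atTop (𝓝 0)) : ∀ y ∈ Ici a, 0 < f y := by
  have hvolume : ∀ s ∈ (atTop : Filter ℝ), volume s = ⊤ := fun s hs => by
    obtain ⟨b, hb⟩ := mem_atTop_sets.1 hs
    exact top_le_iff.1 (Real.volume_Ici (a := b) ▸ measure_mono hb)
  have hnonneg : ∀ z ∈ Ici a, 0 ≤ f z := fun z hz => by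
    refine le_of_forall_pos_le_add fun ε hε =>
      nonneg_of_eventually_le_of_integrableAtFilter hg hvolume ?_
    filter_upwards [hfg.eventually_const_lt (neg_lt_zero.2 hε), eventually_ge_atTop z]
      with s hs hzs
    linarith [hf.antitoneOn hz (le_trans hz hzs) hzs]
  intro y hy
  have hlt : y < y + 1 := lt_add_one y
  have hy' : y + 1 ∈ Ici a := le_trans hy hlt.le
  exact (hnonneg _ hy').trans_lt (hf hy hy' hlt)

theorem integrableOn_exp_neg_mul_mul_of_norm_le {β a C : ℝ} {w : ℝ → ℝ} (hβ : 0 < β)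
    (hw : AEStronglyMeasurable w (volume.restrict (Ioi a))) (hC : ∀ s ∈ Ioi a, ‖w s‖ ≤ C) :
    IntegrableOn (fun s => Real.exp (-β * s) * w s) (Ioi a) :=
  (integrableOn_exp_mul_Ioi (neg_lt_zero.2 hβ) a).mul_bdd hw
    (ae_restrict_of_forall_mem measurableSet_Ioi hC)

end TailIntegral

section LinearODE

variable {β w' y : ℝ} {u w : ℝ → ℝ} {S : Set ℝ}

theorem hasDerivWithinAt_derivWithin_of_linearODE (hS : UniqueDiffOn ℝ S)
    (hu : ∀ x ∈ S, HasDerivWithinAt u (β * u x + w x) S x) (hy : y ∈ S)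
    (hw : HasDerivWithinAt w w' S y) :
    HasDerivWithinAt (derivWithin u S) (β * derivWithin u S y + w') S y := by
  have hderiv : ∀ x ∈ S, derivWithin u S x = β * u x + w x :=
    fun x hx => (hu x hx).derivWithin (hS x hx)
  rw [hderiv y hy]
  exact (((hu y hy).const_mul β).add hw).congr hderiv (hderiv y hy)

theorem hasDerivWithinAt_exp_neg_mul_mul_of_linearODE {v : ℝ → ℝ}
    (hv : HasDerivWithinAt v (β * v y + w') S y) :
    HasDerivWithinAt (fun x => Real.exp (-β * x) * v x) (Real.exp (-β * y) * w') S y := by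
  have hexp : HasDerivWithinAt (fun x => Real.exp (-β * x)) (Real.exp (-β * y) * (-β)) S y :=
    (hasDerivAt_const_mul (-β)).exp.hasDerivWithinAt
  exact (hexp.mul hv).congr_deriv (by ring)

end LinearODE

/-- The velocity `u(y) = -e^{βy} ∫_y^∞ e^{-βs} w(s) ds` recovered from the Robin quantity
`w = u' - β u`. -/
noncomputable def robinVelocity (β : ℝ) (w : ℝ → ℝ) (y : ℝ) : ℝ :=
  -(Real.exp (β * y)) * ∫ s in Ioi y, Real.exp (-β * s) * w s

namespace robinVelocity

variable {β a y : ℝ} {w w' : ℝ → ℝ}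

theorem exp_neg_mul_mul (β : ℝ) (w : ℝ → ℝ) (y : ℝ) :
    Real.exp (-β * y) * robinVelocity β w y = -∫ s in Ioi y, Real.exp (-β * s) * w s := by
  rw [robinVelocity, neg_mul β, Real.exp_neg]
  field_simp

theorem hasDerivWithinAt (h_int : IntegrableOn (fun s => Real.exp (-β * s) * w s) (Ioi a))
    (hy : y ∈ Ici a) (hw : ContinuousWithinAt w (Ici a) y) :
    HasDerivWithinAt (robinVelocity β w) (β * robinVelocity β w y + w y) (Ici a) y := by
  have hexp : HasDerivWithinAt (fun x => -Real.exp (β * x)) (-(Real.exp (β * y) * β)) (Ici a) y :=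
    (hasDerivAt_const_mul β).exp.neg.hasDerivWithinAt
  have htail := hasDerivWithinAt_setIntegral_Ioi h_int hy
    (ContinuousWithinAt.mul (by fun_prop) hw)
  refine (hexp.mul htail).congr_deriv ?_
  have hcancel : Real.exp (β * y) * Real.exp (-β * y) = 1 := by
    rw [← Real.exp_add, neg_mul, add_neg_cancel, Real.exp_zero]
  rw [robinVelocity]
  linear_combination w y * hcancel

theorem derivWithin_eq (h_int : IntegrableOn (fun s => Real.exp (-β * s) * w s) (Ioi a))
    (hy : y ∈ Ici a) (hw : ContinuousWithinAt w (Ici a) y) :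
    derivWithin (robinVelocity β w) (Ici a) y = β * robinVelocity β w y + w y :=
  (robinVelocity.hasDerivWithinAt h_int hy hw).derivWithin (uniqueDiffOn_Ici a y hy)

theorem hasDerivWithinAt_derivWithin
    (h_int : IntegrableOn (fun s => Real.exp (-β * s) * w s) (Ioi a))
    (hw : ∀ s ∈ Ici a, HasDerivWithinAt w (w' s) (Ici a) s) (hy : y ∈ Ici a) :
    HasDerivWithinAt (derivWithin (robinVelocity β w) (Ici a))
      (β * derivWithin (robinVelocity β w) (Ici a) y + w' y) (Ici a) y :=
  hasDerivWithinAt_derivWithin_of_linearODE (uniqueDiffOn_Ici a)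
    (fun s hs => robinVelocity.hasDerivWithinAt h_int hs (hw s hs).continuousWithinAt) hy (hw y hy)

theorem strictAntiOn_exp_neg_mul_mul_derivWithin
    (h_int : IntegrableOn (fun s => Real.exp (-β * s) * w s) (Ioi a))
    (hw : ∀ s ∈ Ici a, HasDerivWithinAt w (w' s) (Ici a) s) (hneg : ∀ s ∈ Ici a, w' s < 0) :
    StrictAntiOn (fun s => Real.exp (-β * s) * derivWithin (robinVelocity β w) (Ici a) s)
      (Ici a) := by
  have hderiv := fun s (hs : s ∈ Ici a) =>
    hasDerivWithinAt_exp_neg_mul_mul_of_linearODE (hasDerivWithinAt_derivWithin h_int hw hs)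
  exact strictAntiOn_of_hasDerivWithinAt_neg (convex_Ici a)
    (fun s hs => (hderiv s hs).continuousWithinAt)
    (fun s hs => (hderiv s (interior_subset hs)).mono interior_subset)
    (fun s hs => mul_neg_of_pos_of_neg (Real.exp_pos _) (hneg s (interior_subset hs)))

theorem tendsto_exp_neg_mul_mul_derivWithin_sub
    (h_int : IntegrableOn (fun s => Real.exp (-β * s) * w s) (Ioi a))
    (hw : ContinuousOn w (Ici a)) :
    Tendsto (fun s => Real.exp (-β * s) * derivWithin (robinVelocity β w) (Ici a) s -
      Real.exp (-β * s) * w s) atTop (𝓝 0) := by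
  have htail : Tendsto (fun s => -β * ∫ x in Ioi s, Real.exp (-β * x) * w x) atTop (𝓝 0) := by
    simpa only [mul_zero, id] using (tendsto_integral_Ioi_zero tendsto_id).const_mul (-β)
  refine htail.congr' ?_
  filter_upwards [eventually_ge_atTop a] with s hs
  rw [derivWithin_eq h_int hs (hw s hs)]
  linear_combination -β * exp_neg_mul_mul β w s

theorem derivWithin_pos (h_int : IntegrableOn (fun s => Real.exp (-β * s) * w s) (Ioi a))
    (hw : ∀ s ∈ Ici a, HasDerivWithinAt w (w' s) (Ici a) s) (hneg : ∀ s ∈ Ici a, w' s < 0)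
    (hy : y ∈ Ici a) : 0 < derivWithin (robinVelocity β w) (Ici a) y := by
  have hw_cont : ContinuousOn w (Ici a) := fun s hs => (hw s hs).continuousWithinAt
  have hweighted : 0 < Real.exp (-β * y) * derivWithin (robinVelocity β w) (Ici a) y :=
    pos_of_strictAntiOn_of_tendsto_sub_integrable
      (strictAntiOn_exp_neg_mul_mul_derivWithin h_int hw hneg) ⟨Ioi a, Ioi_mem_atTop a, h_int⟩
      (tendsto_exp_neg_mul_mul_derivWithin_sub h_int hw_cont) y hy
  exact pos_of_mul_pos_right hweighted (Real.exp_pos _).le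

end robinVelocity

theorem shear_velocity_monotonicity_general
    (β a : ℝ) (w w' : ℝ → ℝ)
    (hderiv : ∀ s ∈ Ici a, HasDerivWithinAt w (w' s) (Ici a) s)
    (h_int : IntegrableOn (fun s => Real.exp (-β * s) * w s) (Ioi a))
    (hneg : ∀ y, a ≤ y → w' y < 0)
    (u : ℝ → ℝ)
    (hu : ∀ y, u y = -(Real.exp (β * y)) * ∫ s in Ioi y, Real.exp (-β * s) * w s) :
    (∀ y ∈ Ici a, DifferentiableWithinAt ℝ u (Ici a) y) ∧
    (∀ y ∈ Ici a, DifferentiableWithinAt ℝ (derivWithin u (Ici a)) (Ici a) y) ∧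
    (∀ y ∈ Ici a, 0 < derivWithin u (Ici a) y) ∧
    (∀ y ∈ Ici a,
      derivWithin (derivWithin u (Ici a)) (Ici a) y - β * derivWithin u (Ici a) y = w' y ∧
        w' y < 0) ∧
    (∀ y ∈ Ici a,
      derivWithin (derivWithin u (Ici a)) (Ici a) y / derivWithin u (Ici a) y < β) := by
  obtain rfl : u = robinVelocity β w := funext hu
  have hu'' := fun y (hy : y ∈ Ici a) =>
    robinVelocity.hasDerivWithinAt_derivWithin h_int hderiv hy
  have hu''_eq : ∀ y ∈ Ici a, derivWithin (derivWithin (robinVelocity β w) (Ici a)) (Ici a) y =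
      β * derivWithin (robinVelocity β w) (Ici a) y + w' y :=
    fun y hy => (hu'' y hy).derivWithin (uniqueDiffOn_Ici a y hy)
  have hpos : ∀ y ∈ Ici a, 0 < derivWithin (robinVelocity β w) (Ici a) y :=
    fun y hy => robinVelocity.derivWithin_pos h_int hderiv hneg hy
  refine ⟨fun y hy => (robinVelocity.hasDerivWithinAt h_int hy
      (hderiv y hy).continuousWithinAt).differentiableWithinAt,
    fun y hy => (hu'' y hy).differentiableWithinAt, hpos,
    fun y hy => ⟨by rw [hu''_eq y hy, add_sub_cancel_left], hneg y hy⟩, fun y hy => ?_⟩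
  rw [div_lt_iff₀ (hpos y hy), hu''_eq y hy]
  linarith [hneg y hy]

/-- For `β > 0` and `w` continuously differentiable with `−β ≤ w ≤ 0`
and `w′ < 0` on `[0,∞)`, the function `u(y) := −e^{βy} ∫_y^∞ e^{−βs} w(s) ds` is twice
differentiable on `[0,∞)`, `u′ > 0`, `u″ − βu′ = w′ < 0`, and consequently `u″/u′ < β`. -/
theorem shear_velocity_monotonicity
    (β : ℝ) (hβ : 0 < β)
    (w w' : ℝ → ℝ)
    (hderiv : ∀ s ∈ Set.Ici (0:ℝ), HasDerivWithinAt w (w' s) (Set.Ici 0) s)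
    (hderivcont : ContinuousOn w' (Set.Ici 0))
    (hbdd : ∀ y : ℝ, 0 ≤ y → -β ≤ w y ∧ w y ≤ 0)
    (hneg : ∀ y : ℝ, 0 ≤ y → w' y < 0)
    (u : ℝ → ℝ)
    (hu : ∀ y : ℝ, u y = -(Real.exp (β * y)) * ∫ s in Set.Ioi y, Real.exp (-β * s) * w s) :
    (∀ y ∈ Set.Ici (0:ℝ), DifferentiableWithinAt ℝ u (Set.Ici 0) y) ∧
    (∀ y ∈ Set.Ici (0:ℝ),
      DifferentiableWithinAt ℝ (derivWithin u (Set.Ici 0)) (Set.Ici 0) y) ∧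
    (∀ y ∈ Set.Ici (0:ℝ), 0 < derivWithin u (Set.Ici 0) y) ∧
    (∀ y ∈ Set.Ici (0:ℝ),
      derivWithin (derivWithin u (Set.Ici 0)) (Set.Ici 0) y
        - β * derivWithin u (Set.Ici 0) y = w' y ∧ w' y < 0) ∧
    (∀ y ∈ Set.Ici (0:ℝ),
      derivWithin (derivWithin u (Set.Ici 0)) (Set.Ici 0) y
        / derivWithin u (Set.Ici 0) y < β) := by
  have hw : ContinuousOn w (Ioi 0) := fun s hs =>
    (hderiv s (Ioi_subset_Ici_self hs)).continuousWithinAt.mono Ioi_subset_Ici_self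
  have hbound : ∀ s ∈ Ioi (0 : ℝ), ‖w s‖ ≤ β := fun s hs =>
    abs_le.2 ⟨(hbdd s (le_of_lt hs)).1, (hbdd s (le_of_lt hs)).2.trans hβ.le⟩
  exact shear_velocity_monotonicity_general β 0 w w' hderiv
    (integrableOn_exp_neg_mul_mul_of_norm_le hβ (hw.aestronglyMeasurable measurableSet_Ioi) hbound)
    hneg u hu
end

section
/- Let u, v, ũ, ṽ, f : ℝ³ → ℝ be infinitely differentiable functions of (t,x,y). Assume at every point: ∂_y ũ > 0; ∂ₓu + ∂_y v = 0; ∂ₓũ + ∂_y ṽ = 0; and ∂ₜu + ũ ∂ₓu + ṽ ∂_y u + u ∂ₓũ + v ∂_y ũ − ∂_y∂_y u = f. Define w := ∂_y( u/∂_y ũ ), η := ∂_y∂_y ũ / ∂_y ũ, f̃ := f/∂_y ũ, and ζ := ( (∂ₜ + ũ ∂ₓ + ṽ ∂_y − ∂_y∂_y)(∂_y ũ) ) / ∂_y ũ. Then at every point: ∂ₜw + ∂ₓ(ũ w) + ∂_y(ṽ w) − 2 ∂_y(η w) + ∂_y( (u/∂_y ũ) · ζ ) − ∂_y∂_y w =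 ∂_y f̃. -/
/-- Partial derivative in the time variable of a function of `(t,x,y)`. -/
noncomputable def Dt3 (f : ℝ → ℝ → ℝ → ℝ) : ℝ → ℝ → ℝ → ℝ :=
  fun t x y => deriv (fun τ => f τ x y) t

/-- Partial derivative in the tangential variable of a function of `(t,x,y)`. -/
noncomputable def Dx3 (f : ℝ → ℝ → ℝ → ℝ) : ℝ → ℝ → ℝ → ℝ :=
  fun t x y => deriv (fun ξ => f t ξ y) x

/-- Partial derivative in the normal variable of a function of `(t,x,y)`. -/
noncomputable def Dy3 (f : ℝ → ℝ → ℝ → ℝ) : ℝ → ℝ → ℝ → ℝ :=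
  fun t x y => deriv (fun z => f t x z) y

/-!
Put `q = u / ∂_y ũ` and `L = ∂ₜ + ũ∂ₓ + ṽ∂_y − ∂_y∂_y`. The Leibniz rule for `L` applied to
`u = q ∂_y ũ` turns the equation divided by `∂_y ũ` into `L q + qζ − 2η ∂_y q + q ∂ₓũ + v = f̃`.
Now differentiate in `y`, with `w = ∂_y q`. Writing the advection term in conservative form leaves
`∂_y(ũ ∂ₓq) − ∂ₓ(ũ w) = ∂_y ũ ∂ₓq − w ∂ₓũ`, which together with `∂_y(q ∂ₓũ + v)` gives
`∂ₓ(q ∂_y ũ) + ∂_y v = ∂ₓu + ∂_y v = 0`.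
-/

theorem fderiv_fderiv_apply_comm {𝕜 E F : Type*} [RCLike 𝕜]
    [NormedAddCommGroup E] [NormedSpace 𝕜 E] [NormedAddCommGroup F] [NormedSpace 𝕜 F]
    {G : E → F} {p : E} (hG : ContDiffAt 𝕜 2 G p) (a b : E) :
    fderiv 𝕜 (fun q => fderiv 𝕜 G q a) p b = fderiv 𝕜 (fun q => fderiv 𝕜 G q b) p a := by
  have hdiff : DifferentiableAt 𝕜 (fderiv 𝕜 G) p :=
    (hG.fderiv_right (m := 1) (by norm_num)).differentiableAt one_ne_zero
  have fderiv_apply (c d : E) :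
      fderiv 𝕜 (fun q => fderiv 𝕜 G q c) p d = fderiv 𝕜 (fderiv 𝕜 G) p d c := by
    simp [fderiv_clm_apply hdiff (differentiableAt_const c)]
  rw [fderiv_apply, fderiv_apply]
  exact (hG.isSymmSndFDerivAt (by simp)).eq b a

section PartialDerivatives

variable {F G : ℝ → ℝ → ℝ → ℝ} {m n : WithTop ℕ∞}

theorem uncurry_Dt3 (hF : Differentiable ℝ ↿F) :
    ↿(Dt3 F) = fun p => fderiv ℝ ↿F p (1, 0, 0) := by
  funext ⟨t, x, y⟩
  have hline : HasDerivAt (fun s : ℝ => (s, x, y)) (1, 0, 0) t :=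
    (hasDerivAt_id t).prodMk (hasDerivAt_const t (x, y))
  exact ((hF (t, x, y)).hasFDerivAt.comp_hasDerivAt t hline).deriv

theorem uncurry_Dx3 (hF : Differentiable ℝ ↿F) :
    ↿(Dx3 F) = fun p => fderiv ℝ ↿F p (0, 1, 0) := by
  funext ⟨t, x, y⟩
  have hline : HasDerivAt (fun s : ℝ => (t, s, y)) (0, 1, 0) x :=
    (hasDerivAt_const x t).prodMk ((hasDerivAt_id x).prodMk (hasDerivAt_const x y))
  exact ((hF (t, x, y)).hasFDerivAt.comp_hasDerivAt x hline).deriv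

theorem uncurry_Dy3 (hF : Differentiable ℝ ↿F) :
    ↿(Dy3 F) = fun p => fderiv ℝ ↿F p (0, 0, 1) := by
  funext ⟨t, x, y⟩
  have hline : HasDerivAt (fun s : ℝ => (t, x, s)) (0, 0, 1) y :=
    (hasDerivAt_const y t).prodMk ((hasDerivAt_const y x).prodMk (hasDerivAt_id y))
  exact ((hF (t, x, y)).hasFDerivAt.comp_hasDerivAt y hline).deriv

theorem contDiff_Dt3 (hF : ContDiff ℝ n ↿F) (hmn : m + 1 ≤ n) : ContDiff ℝ m ↿(Dt3 F) := by
  rw [uncurry_Dt3 ((hF.of_le (le_add_self.trans hmn)).differentiable one_ne_zero)]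
  exact (hF.fderiv_right hmn).clm_apply contDiff_const

theorem contDiff_Dx3 (hF : ContDiff ℝ n ↿F) (hmn : m + 1 ≤ n) : ContDiff ℝ m ↿(Dx3 F) := by
  rw [uncurry_Dx3 ((hF.of_le (le_add_self.trans hmn)).differentiable one_ne_zero)]
  exact (hF.fderiv_right hmn).clm_apply contDiff_const

theorem contDiff_Dy3 (hF : ContDiff ℝ n ↿F) (hmn : m + 1 ≤ n) : ContDiff ℝ m ↿(Dy3 F) := by
  rw [uncurry_Dy3 ((hF.of_le (le_add_self.trans hmn)).differentiable one_ne_zero)]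
  exact (hF.fderiv_right hmn).clm_apply contDiff_const

theorem Dy3_Dt3_comm (hF : ContDiff ℝ 2 ↿F) : Dy3 (Dt3 F) = Dt3 (Dy3 F) := by
  have hF₁ : Differentiable ℝ ↿F := hF.differentiable two_ne_zero
  have hFt := (contDiff_Dt3 (m := 1) hF (by norm_num)).differentiable one_ne_zero
  have hFy := (contDiff_Dy3 (m := 1) hF (by norm_num)).differentiable one_ne_zero
  funext t x y
  calc Dy3 (Dt3 F) t x y
      = fderiv ℝ (fun p => fderiv ℝ ↿F p (1, 0, 0)) (t, x, y) (0, 0, 1) := by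
        rw [← uncurry_Dt3 hF₁]; exact congrFun (uncurry_Dy3 hFt) (t, x, y)
    _ = fderiv ℝ (fun p => fderiv ℝ ↿F p (0, 0, 1)) (t, x, y) (1, 0, 0) :=
        fderiv_fderiv_apply_comm hF.contDiffAt _ _
    _ = Dt3 (Dy3 F) t x y := by
        rw [← uncurry_Dy3 hF₁]; exact (congrFun (uncurry_Dt3 hFy) (t, x, y)).symm

theorem Dy3_Dx3_comm (hF : ContDiff ℝ 2 ↿F) : Dy3 (Dx3 F) = Dx3 (Dy3 F) := by
  have hF₁ : Differentiable ℝ ↿F := hF.differentiable two_ne_zero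
  have hFx := (contDiff_Dx3 (m := 1) hF (by norm_num)).differentiable one_ne_zero
  have hFy := (contDiff_Dy3 (m := 1) hF (by norm_num)).differentiable one_ne_zero
  funext t x y
  calc Dy3 (Dx3 F) t x y
      = fderiv ℝ (fun p => fderiv ℝ ↿F p (0, 1, 0)) (t, x, y) (0, 0, 1) := by
        rw [← uncurry_Dx3 hF₁]; exact congrFun (uncurry_Dy3 hFx) (t, x, y)
    _ = fderiv ℝ (fun p => fderiv ℝ ↿F p (0, 0, 1)) (t, x, y) (0, 1, 0) :=
        fderiv_fderiv_apply_comm hF.contDiffAt _ _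
    _ = Dx3 (Dy3 F) t x y := by
        rw [← uncurry_Dy3 hF₁]; exact (congrFun (uncurry_Dx3 hFy) (t, x, y)).symm

theorem differentiable_slice_t (hF : Differentiable ℝ ↿F) (x y : ℝ) :
    Differentiable ℝ fun t => F t x y :=
  hF.comp (by fun_prop : Differentiable ℝ fun t : ℝ => (t, x, y))

theorem differentiable_slice_x (hF : Differentiable ℝ ↿F) (t y : ℝ) :
    Differentiable ℝ fun x => F t x y :=
  hF.comp (by fun_prop : Differentiable ℝ fun x : ℝ => (t, x, y))

theorem differentiable_slice_y (hF : Differentiable ℝ ↿F) (t x : ℝ) :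
    Differentiable ℝ fun y => F t x y :=
  hF.comp (by fun_prop : Differentiable ℝ fun y : ℝ => (t, x, y))

theorem Dt3_mul (hF : Differentiable ℝ ↿F) (hG : Differentiable ℝ ↿G) :
    Dt3 (F * G) = Dt3 F * G + F * Dt3 G :=
  funext₃ fun t x y =>
    deriv_fun_mul (differentiable_slice_t hF x y t) (differentiable_slice_t hG x y t)

theorem Dx3_mul (hF : Differentiable ℝ ↿F) (hG : Differentiable ℝ ↿G) :
    Dx3 (F * G) = Dx3 F * G + F * Dx3 G :=
  funext₃ fun t x y =>
    deriv_fun_mul (differentiable_slice_x hF t y x) (differentiable_slice_x hG t y x)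

theorem Dy3_mul (hF : Differentiable ℝ ↿F) (hG : Differentiable ℝ ↿G) :
    Dy3 (F * G) = Dy3 F * G + F * Dy3 G :=
  funext₃ fun t x y =>
    deriv_fun_mul (differentiable_slice_y hF t x y) (differentiable_slice_y hG t x y)

theorem Dy3_add (hF : Differentiable ℝ ↿F) (hG : Differentiable ℝ ↿G) :
    Dy3 (F + G) = Dy3 F + Dy3 G :=
  funext₃ fun t x y =>
    deriv_fun_add (differentiable_slice_y hF t x y) (differentiable_slice_y hG t x y)

theorem Dy3_sub (hF : Differentiable ℝ ↿F) (hG : Differentiable ℝ ↿G) :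
    Dy3 (F - G) = Dy3 F - Dy3 G :=
  funext₃ fun t x y =>
    deriv_fun_sub (differentiable_slice_y hF t x y) (differentiable_slice_y hG t x y)

theorem contDiff_uncurry_div (hF : ContDiff ℝ n ↿F) (hG : ContDiff ℝ n ↿G)
    (hG₀ : ∀ t x y, G t x y ≠ 0) : ContDiff ℝ n ↿(F / G) :=
  hF.div hG fun p => hG₀ p.1 p.2.1 p.2.2

theorem differentiable_uncurry_div (hF : Differentiable ℝ ↿F) (hG : Differentiable ℝ ↿G)
    (hG₀ : ∀ t x y, G t x y ≠ 0) : Differentiable ℝ ↿(F / G) := by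
  rw [div_eq_mul_inv]
  exact hF.mul (hG.inv fun p => hG₀ p.1 p.2.1 p.2.2)

end PartialDerivatives

/-- The advection–diffusion operator `∂ₜ + a∂ₓ + b∂_y − ∂_y∂_y` with velocity `(a, b)` and diffusion
in `y` only. It is the principal part of the linearized equation, and `ζ` is its value at `∂_y ũ`
divided by `∂_y ũ`. -/
noncomputable def advectionDiffusion (a b F : ℝ → ℝ → ℝ → ℝ) : ℝ → ℝ → ℝ → ℝ :=
  Dt3 F + a * Dx3 F + b * Dy3 F - Dy3 (Dy3 F)

section AdvectionDiffusion

variable {a b q g u v : ℝ → ℝ → ℝ → ℝ}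

theorem differentiable_advectionDiffusion (ha : Differentiable ℝ ↿a) (hb : Differentiable ℝ ↿b)
    (hq : ContDiff ℝ 3 ↿q) : Differentiable ℝ ↿(advectionDiffusion a b q) := by
  have hqt := (contDiff_Dt3 (m := 2) hq (by norm_num)).differentiable two_ne_zero
  have hqx := (contDiff_Dx3 (m := 2) hq (by norm_num)).differentiable two_ne_zero
  have hqy := contDiff_Dy3 (m := 2) hq (by norm_num)
  have hqyy := (contDiff_Dy3 (m := 1) hqy (by norm_num)).differentiable one_ne_zero
  exact ((hqt.add (ha.mul hqx)).add (hb.mul (hqy.differentiable two_ne_zero))).sub hqyy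

theorem advectionDiffusion_mul (hq : ContDiff ℝ 2 ↿q) (hg : ContDiff ℝ 2 ↿g) :
    advectionDiffusion a b (q * g) =
      advectionDiffusion a b q * g + q * advectionDiffusion a b g - 2 * (Dy3 q * Dy3 g) := by
  have hq₁ : Differentiable ℝ ↿q := hq.differentiable two_ne_zero
  have hg₁ : Differentiable ℝ ↿g := hg.differentiable two_ne_zero
  have hqy := (contDiff_Dy3 (m := 1) hq (by norm_num)).differentiable one_ne_zero
  have hgy := (contDiff_Dy3 (m := 1) hg (by norm_num)).differentiable one_ne_zero
  have hyy : Dy3 (Dy3 (q * g)) = Dy3 (Dy3 q) * g + 2 * (Dy3 q * Dy3 g) + q * Dy3 (Dy3 g) := by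
    rw [Dy3_mul hq₁ hg₁, Dy3_add (hqy.mul hg₁) (hq₁.mul hgy), Dy3_mul hqy hg₁, Dy3_mul hq₁ hgy]
    ring
  simp only [advectionDiffusion]
  rw [hyy, Dt3_mul hq₁ hg₁, Dx3_mul hq₁ hg₁, Dy3_mul hq₁ hg₁]
  ring

theorem advectionDiffusion_div (hu : ContDiff ℝ 2 ↿u) (hg : ContDiff ℝ 2 ↿g)
    (hg₀ : ∀ t x y, g t x y ≠ 0) :
    advectionDiffusion a b u / g =
      advectionDiffusion a b (u / g) + u / g * (advectionDiffusion a b g / g)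
        - 2 * (Dy3 g / g * Dy3 (u / g)) := by
  have hmul : u / g * g = u := funext₃ fun t x y => div_mul_cancel₀ _ (hg₀ t x y)
  have hleibniz := advectionDiffusion_mul (a := a) (b := b) (contDiff_uncurry_div hu hg hg₀) hg
  rw [hmul] at hleibniz
  rw [hleibniz]
  generalize u / g = q
  funext t x y
  have := hg₀ t x y
  simp only [Pi.add_apply, Pi.sub_apply, Pi.mul_apply, Pi.div_apply, Pi.ofNat_apply]
  field_simp

theorem Dy3_advectionDiffusion (ha : Differentiable ℝ ↿a) (hb : Differentiable ℝ ↿b)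
    (hq : ContDiff ℝ 3 ↿q) :
    Dy3 (advectionDiffusion a b q) =
      Dt3 (Dy3 q) + Dx3 (a * Dy3 q) + Dy3 (b * Dy3 q) - Dy3 (Dy3 (Dy3 q))
        + (Dy3 a * Dx3 q - Dx3 a * Dy3 q) := by
  have hq₂ : ContDiff ℝ 2 ↿q := hq.of_le (by norm_num)
  have hqt := (contDiff_Dt3 (m := 2) hq (by norm_num)).differentiable two_ne_zero
  have hqx := (contDiff_Dx3 (m := 2) hq (by norm_num)).differentiable two_ne_zero
  have hqy := contDiff_Dy3 (m := 2) hq (by norm_num)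
  have hqy₁ := hqy.differentiable two_ne_zero
  have hqyy := (contDiff_Dy3 (m := 1) hqy (by norm_num)).differentiable one_ne_zero
  rw [advectionDiffusion, Dy3_sub ((hqt.add (ha.mul hqx)).add (hb.mul hqy₁)) hqyy,
    Dy3_add (hqt.add (ha.mul hqx)) (hb.mul hqy₁), Dy3_add hqt (ha.mul hqx),
    Dy3_mul ha hqx, Dx3_mul ha hqy₁, Dy3_Dt3_comm hq₂, Dy3_Dx3_comm hq₂]
  ring

theorem Dy3_mul_Dx3_add (ha : ContDiff ℝ 2 ↿a) (hq : Differentiable ℝ ↿q)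
    (hv : Differentiable ℝ ↿v) (hdiv : Dx3 (q * Dy3 a) + Dy3 v = 0) :
    Dy3 (q * Dx3 a + v) = Dx3 a * Dy3 q - Dy3 a * Dx3 q := by
  have hax := (contDiff_Dx3 (m := 1) ha (by norm_num)).differentiable one_ne_zero
  have hay := (contDiff_Dy3 (m := 1) ha (by norm_num)).differentiable one_ne_zero
  rw [Dx3_mul hq hay] at hdiv
  rw [Dy3_add (hq.mul hax) hv, Dy3_mul hq hax, Dy3_Dx3_comm ha]
  linear_combination hdiv

theorem Dy3_advectionDiffusion_add_eq_conservative {η ζ : ℝ → ℝ → ℝ → ℝ} (ha : ContDiff ℝ 2 ↿a)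
    (hb : Differentiable ℝ ↿b) (hq : ContDiff ℝ 3 ↿q) (hv : Differentiable ℝ ↿v)
    (hη : Differentiable ℝ ↿η) (hζ : Differentiable ℝ ↿ζ)
    (hdiv : Dx3 (q * Dy3 a) + Dy3 v = 0) :
    Dy3 (advectionDiffusion a b q + q * ζ - 2 * (η * Dy3 q) + (q * Dx3 a + v)) =
      Dt3 (Dy3 q) + Dx3 (a * Dy3 q) + Dy3 (b * Dy3 q) - 2 * Dy3 (η * Dy3 q) + Dy3 (q * ζ)
        - Dy3 (Dy3 (Dy3 q)) := by
  have ha₁ : Differentiable ℝ ↿a := ha.differentiable two_ne_zero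
  have hax := (contDiff_Dx3 (m := 1) ha (by norm_num)).differentiable one_ne_zero
  have hq₁ : Differentiable ℝ ↿q := hq.differentiable three_ne_zero
  have hqy := (contDiff_Dy3 (m := 2) hq (by norm_num)).differentiable two_ne_zero
  have hLq := differentiable_advectionDiffusion ha₁ hb hq
  have hqζ : Differentiable ℝ ↿(q * ζ) := hq₁.mul hζ
  have hηw : Differentiable ℝ ↿(η * Dy3 q) := hη.mul hqy
  have hqv : Differentiable ℝ ↿(q * Dx3 a + v) := (hq₁.mul hax).add hv
  rw [two_mul (η * Dy3 q), Dy3_add ((hLq.add hqζ).sub (hηw.add hηw)) hqv,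
    Dy3_sub (hLq.add hqζ) (hηw.add hηw), Dy3_add hLq hqζ, Dy3_add hηw hηw,
    Dy3_advectionDiffusion ha₁ hb hq, Dy3_mul_Dx3_add ha hq₁ hv hdiv]
  ring

end AdvectionDiffusion

theorem linearized_prandtl_quotient_equation {u v ub vb f : ℝ → ℝ → ℝ → ℝ}
    (hu : ContDiff ℝ 2 ↿u) (hub : ContDiff ℝ 3 ↿ub) (hub₀ : ∀ t x y, Dy3 ub t x y ≠ 0)
    (heq : Dt3 u + ub * Dx3 u + vb * Dy3 u + u * Dx3 ub + v * Dy3 ub - Dy3 (Dy3 u) = f) :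
    advectionDiffusion ub vb (u / Dy3 ub)
        + u / Dy3 ub * (advectionDiffusion ub vb (Dy3 ub) / Dy3 ub)
        - 2 * (Dy3 (Dy3 ub) / Dy3 ub * Dy3 (u / Dy3 ub)) + (u / Dy3 ub * Dx3 ub + v)
      = f / Dy3 ub := by
  have hf : f = advectionDiffusion ub vb u + u * Dx3 ub + v * Dy3 ub := by
    rw [← heq, advectionDiffusion]
    ring
  rw [← advectionDiffusion_div hu (contDiff_Dy3 hub (by norm_num)) hub₀, hf]
  funext t x y
  have := hub₀ t x y
  simp only [Pi.add_apply, Pi.mul_apply, Pi.div_apply]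
  field_simp
  ring

theorem linearized_prandtl_vorticity_equation_general {u v ub vb f w η ft ζ : ℝ → ℝ → ℝ → ℝ}
    (hu : ContDiff ℝ 3 ↿u) (hv : Differentiable ℝ ↿v)
    (hub : ContDiff ℝ 4 ↿ub) (hvb : Differentiable ℝ ↿vb)
    (hub₀ : ∀ t x y, Dy3 ub t x y ≠ 0) (hdiv : Dx3 u + Dy3 v = 0)
    (heq : Dt3 u + ub * Dx3 u + vb * Dy3 u + u * Dx3 ub + v * Dy3 ub - Dy3 (Dy3 u) = f)
    (hw : w = Dy3 (u / Dy3 ub)) (hη : η = Dy3 (Dy3 ub) / Dy3 ub) (hft : ft = f / Dy3 ub)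
    (hζ : ζ = advectionDiffusion ub vb (Dy3 ub) / Dy3 ub) :
    Dt3 w + Dx3 (ub * w) + Dy3 (vb * w) - 2 * Dy3 (η * w) + Dy3 (u / Dy3 ub * ζ) - Dy3 (Dy3 w)
      = Dy3 ft := by
  have hub₁ : Differentiable ℝ ↿ub := hub.differentiable four_ne_zero
  have hub₂ : ContDiff ℝ 2 ↿ub := hub.of_le (by norm_num)
  have hg : ContDiff ℝ 3 ↿(Dy3 ub) := contDiff_Dy3 hub (by norm_num)
  have hg₁ : Differentiable ℝ ↿(Dy3 ub) := hg.differentiable three_ne_zero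
  have hgy := (contDiff_Dy3 (m := 2) hg (by norm_num)).differentiable two_ne_zero
  have hq : ContDiff ℝ 3 ↿(u / Dy3 ub) := contDiff_uncurry_div hu hg hub₀
  have hη₁ : Differentiable ℝ ↿η := hη ▸ differentiable_uncurry_div hgy hg₁ hub₀
  have hζ₁ : Differentiable ℝ ↿ζ :=
    hζ ▸ differentiable_uncurry_div (differentiable_advectionDiffusion hub₁ hvb hg) hg₁ hub₀
  have hquotient := linearized_prandtl_quotient_equation (hu.of_le (by norm_num))
    (hub.of_le (by norm_num)) hub₀ heq
  have hqg : u / Dy3 ub * Dy3 ub = u := funext₃ fun t x y => div_mul_cancel₀ _ (hub₀ t x y)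
  rw [hft, ← hquotient, ← hη, ← hζ, hw]
  exact (Dy3_advectionDiffusion_add_eq_conservative hub₂ hvb hq hv hη₁ hζ₁ (by rwa [hqg])).symm

/-- Interior part of Lemma 3.1: if `(u,v)` solves the linearized
Prandtl-type equation around `(ub, vb)` with force `f`, both velocity fields are
divergence free and `∂_y ub > 0`, then `w := ∂_y(u/∂_y ub)` satisfies
`∂ₜw + ∂ₓ(ub·w) + ∂_y(vb·w) − 2∂_y(η·w) + ∂_y((u/∂_y ub)·ζ) − ∂_y∂_y w = ∂_y f̃`. -/
theorem linearized_prandtl_vorticity_equation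
    (u v ub vb f : ℝ → ℝ → ℝ → ℝ)
    (hsm_u : ContDiff ℝ (⊤ : ℕ∞) (fun p : ℝ × ℝ × ℝ => u p.1 p.2.1 p.2.2))
    (hsm_v : ContDiff ℝ (⊤ : ℕ∞) (fun p : ℝ × ℝ × ℝ => v p.1 p.2.1 p.2.2))
    (hsm_ub : ContDiff ℝ (⊤ : ℕ∞) (fun p : ℝ × ℝ × ℝ => ub p.1 p.2.1 p.2.2))
    (hsm_vb : ContDiff ℝ (⊤ : ℕ∞) (fun p : ℝ × ℝ × ℝ => vb p.1 p.2.1 p.2.2))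
    (hsm_f : ContDiff ℝ (⊤ : ℕ∞) (fun p : ℝ × ℝ × ℝ => f p.1 p.2.1 p.2.2))
    (hmono : ∀ t x y : ℝ, 0 < Dy3 ub t x y)
    (hdiv : ∀ t x y : ℝ, Dx3 u t x y + Dy3 v t x y = 0)
    (hdivb : ∀ t x y : ℝ, Dx3 ub t x y + Dy3 vb t x y = 0)
    (heq : ∀ t x y : ℝ,
      Dt3 u t x y + ub t x y * Dx3 u t x y + vb t x y * Dy3 u t x y
        + u t x y * Dx3 ub t x y + v t x y * Dy3 ub t x y - Dy3 (Dy3 u) t x y = f t x y)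
    (w η ft ζ : ℝ → ℝ → ℝ → ℝ)
    (hw : ∀ t x y : ℝ, w t x y = Dy3 (fun a b c => u a b c / Dy3 ub a b c) t x y)
    (hη : ∀ t x y : ℝ, η t x y = Dy3 (Dy3 ub) t x y / Dy3 ub t x y)
    (hft : ∀ t x y : ℝ, ft t x y = f t x y / Dy3 ub t x y)
    (hζ : ∀ t x y : ℝ, ζ t x y =
      (Dt3 (Dy3 ub) t x y + ub t x y * Dx3 (Dy3 ub) t x y
        + vb t x y * Dy3 (Dy3 ub) t x y - Dy3 (Dy3 (Dy3 ub)) t x y) / Dy3 ub t x y) :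
    ∀ t x y : ℝ,
      Dt3 w t x y
        + Dx3 (fun a b c => ub a b c * w a b c) t x y
        + Dy3 (fun a b c => vb a b c * w a b c) t x y
        - 2 * Dy3 (fun a b c => η a b c * w a b c) t x y
        + Dy3 (fun a b c => (u a b c / Dy3 ub a b c) * ζ a b c) t x y
        - Dy3 (Dy3 w) t x y
      = Dy3 ft t x y := by
  exact congrFun₃ <| linearized_prandtl_vorticity_equation_general
    (hsm_u.of_le (by norm_cast)) (hsm_v.differentiable (by simp))
    (hsm_ub.of_le (by norm_cast)) (hsm_vb.differentiable (by simp))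
    (fun t x y => (hmono t x y).ne') (funext₃ hdiv) (funext₃ heq)
    (funext₃ hw) (funext₃ hη) (funext₃ hft) (funext₃ hζ)
end

section
/- Let β > 0 and let u, v, ũ, ṽ, f : ℝ³ → ℝ be infinitely differentiable functions of (t,x,y). Assume at every point: ∂_y ũ > 0 and ∂ₜu + ũ ∂ₓu + ṽ ∂_y u + u ∂ₓũ + v ∂_y ũ − ∂_y∂_y u = f. Define η := ∂_y∂_y ũ / ∂_y ũ, w := ∂_y( u/∂_y ũ ), f̃ := f/∂_y ũ, ζ := ( (∂ₜ + ũ ∂ₓ + ṽ ∂_y − ∂_y∂_y)(∂_y ũ) ) / ∂_y ũ, and ζ̃ := ( ∂_y∂_y∂ₜũ + ũ ∂_y∂_y∂ₓũ − η( ∂_y∂ₜũ + ũ ∂_y∂ₓũ ) ) / ∂_y ũ. Assume in addition that for all (t,x): v(t,x,0) = 0, ṽ(t,x,0) = 0, ∂_y u(t,x,0) = β u(t,x,0), and β − η(t,x,0) > 0. Then for all (t,x), at y = 0: (i) w = (u/∂_y ũ)(β − η), and (ii) ∂ₜw + ∂ₓ(ũ w) − (β − η)( ∂_y w + 2 η w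 + f̃ ) + ζ w + ( ζ̃/(β − η) ) w = 0. -/
/-!
Put `g = ∂_y ũ` and `q = u / g`, so that `w = ∂_y q`. Dividing the equation for `u = g q` by `g`
gives, at `y = 0`, where `v` and `ṽ` vanish,
`∂ₜq + ũ ∂ₓq + q ∂ₓũ + ζ q = ∂_y w + 2 η w + f̃`.
The Robin condition reads `w = q (β - η)` along the whole boundary, so it may be differentiated
tangentially: `(∂ₜ + ũ ∂ₓ) w = (β - η) (∂ₜ + ũ ∂ₓ) q - q (∂ₜ + ũ ∂ₓ) η`. Commuting derivatives shows
`(∂ₜ + ũ ∂ₓ) η = ζ̃`, and eliminating `q = w / (β - η)` yields the boundary equation.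
-/

section LineDeriv

open Filter Topology

variable {𝕜 E F : Type*} [NontriviallyNormedField 𝕜] [NormedAddCommGroup E] [NormedSpace 𝕜 E]
  [NormedAddCommGroup F] [NormedSpace 𝕜 F] {f : E → F} {p : E} {m n : WithTop ℕ∞}

theorem eventually_lineDeriv_eq_fderiv (hf : ContDiffAt 𝕜 n f p) (hn : 1 ≤ n) (e : E) :
    (fun q => lineDeriv 𝕜 f q e) =ᶠ[𝓝 p] fun q => fderiv 𝕜 f q e :=
  ((hf.of_le hn).eventually (by simp)).mono fun _ hq =>
    (hq.differentiableAt one_ne_zero).lineDeriv_eq_fderiv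

theorem contDiffAt_lineDeriv (hf : ContDiffAt 𝕜 n f p) (hmn : m + 1 ≤ n) (e : E) :
    ContDiffAt 𝕜 m (fun q => lineDeriv 𝕜 f q e) p :=
  ((hf.fderiv_right hmn).clm_apply contDiffAt_const).congr_of_eventuallyEq
    (eventually_lineDeriv_eq_fderiv hf (le_add_self.trans hmn) e)

theorem lineDeriv_lineDeriv_eq_fderiv_fderiv (hf : ContDiffAt 𝕜 n f p) (hn : 2 ≤ n) (a b : E) :
    lineDeriv 𝕜 (fun q => lineDeriv 𝕜 f q a) p b = fderiv 𝕜 (fderiv 𝕜 f) p b a := by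
  have hdf : DifferentiableAt 𝕜 (fderiv 𝕜 f) p :=
    (hf.fderiv_right (m := 1) (by simpa [one_add_one_eq_two] using hn)).differentiableAt one_ne_zero
  have happly : DifferentiableAt 𝕜 (fun q => fderiv 𝕜 f q a) p :=
    hdf.clm_apply (differentiableAt_const a)
  rw [(eventually_lineDeriv_eq_fderiv hf (one_le_two.trans hn) a).lineDeriv_eq,
    happly.lineDeriv_eq_fderiv, fderiv_clm_apply hdf (differentiableAt_const a)]
  simp

theorem lineDeriv_lineDeriv_comm (hf : ContDiffAt 𝕜 n f p) (hn : minSmoothness 𝕜 2 ≤ n) (a b : E) :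
    lineDeriv 𝕜 (fun q => lineDeriv 𝕜 f q a) p b =
      lineDeriv 𝕜 (fun q => lineDeriv 𝕜 f q b) p a := by
  have hn₂ : 2 ≤ n := le_minSmoothness.trans hn
  rw [lineDeriv_lineDeriv_eq_fderiv_fderiv hf hn₂, lineDeriv_lineDeriv_eq_fderiv_fderiv hf hn₂,
    (hf.isSymmSndFDerivAt hn).eq]

end LineDeriv

section PartialDerivatives

open Filter Topology

variable {f g : ℝ → ℝ → ℝ → ℝ} {t x y : ℝ} {m n : WithTop ℕ∞}

theorem uncurry_dt3 (f : ℝ → ℝ → ℝ → ℝ) :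
    ↿(Dt3 f) = fun p => lineDeriv ℝ ↿f p (1, 0, 0) := by
  funext ⟨t, x, y⟩
  simpa [Function.HasUncurry.uncurry, Dt3, lineDeriv] using
    (deriv_comp_const_add (fun τ => f τ x y) t 0).symm

theorem uncurry_dx3 (f : ℝ → ℝ → ℝ → ℝ) :
    ↿(Dx3 f) = fun p => lineDeriv ℝ ↿f p (0, 1, 0) := by
  funext ⟨t, x, y⟩
  simpa [Function.HasUncurry.uncurry, Dx3, lineDeriv] using
    (deriv_comp_const_add (fun ξ => f t ξ y) x 0).symm

theorem uncurry_dy3 (f : ℝ → ℝ → ℝ → ℝ) :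
    ↿(Dy3 f) = fun p => lineDeriv ℝ ↿f p (0, 0, 1) := by
  funext ⟨t, x, y⟩
  simpa [Function.HasUncurry.uncurry, Dy3, lineDeriv] using
    (deriv_comp_const_add (fun z => f t x z) y 0).symm

theorem contDiffAt_dy3 (hf : ContDiffAt ℝ n ↿f (t, x, y)) (hmn : m + 1 ≤ n) :
    ContDiffAt ℝ m ↿(Dy3 f) (t, x, y) := by
  rw [uncurry_dy3]
  exact contDiffAt_lineDeriv hf hmn _

theorem dt3_congr (h : ↿f =ᶠ[𝓝 (t, x, y)] ↿g) : Dt3 f t x y = Dt3 g t x y := by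
  have hline := h.lineDeriv_eq (𝕜 := ℝ) (v := (1, 0, 0))
  rwa [← congrFun (uncurry_dt3 f), ← congrFun (uncurry_dt3 g)] at hline

theorem dx3_congr (h : ↿f =ᶠ[𝓝 (t, x, y)] ↿g) : Dx3 f t x y = Dx3 g t x y := by
  have hline := h.lineDeriv_eq (𝕜 := ℝ) (v := (0, 1, 0))
  rwa [← congrFun (uncurry_dx3 f), ← congrFun (uncurry_dx3 g)] at hline

theorem dy3_congr (h : ↿f =ᶠ[𝓝 (t, x, y)] ↿g) : Dy3 f t x y = Dy3 g t x y := by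
  have hline := h.lineDeriv_eq (𝕜 := ℝ) (v := (0, 0, 1))
  rwa [← congrFun (uncurry_dy3 f), ← congrFun (uncurry_dy3 g)] at hline

theorem dy3_eventuallyEq (h : ↿f =ᶠ[𝓝 (t, x, y)] ↿g) :
    ↿(Dy3 f) =ᶠ[𝓝 (t, x, y)] ↿(Dy3 g) :=
  h.eventuallyEq_nhds.mono fun _ => dy3_congr

theorem dy3_dt3_comm (hf : ContDiffAt ℝ 2 ↿f (t, x, y)) :
    Dy3 (Dt3 f) t x y = Dt3 (Dy3 f) t x y := by
  have hcomm := lineDeriv_lineDeriv_comm hf (by simp) (1, 0, 0) (0, 0, 1)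
  rwa [← uncurry_dt3, ← uncurry_dy3, ← congrFun (uncurry_dy3 (Dt3 f)),
    ← congrFun (uncurry_dt3 (Dy3 f))] at hcomm

theorem dy3_dx3_comm (hf : ContDiffAt ℝ 2 ↿f (t, x, y)) :
    Dy3 (Dx3 f) t x y = Dx3 (Dy3 f) t x y := by
  have hcomm := lineDeriv_lineDeriv_comm hf (by simp) (0, 1, 0) (0, 0, 1)
  rwa [← uncurry_dx3, ← uncurry_dy3, ← congrFun (uncurry_dy3 (Dx3 f)),
    ← congrFun (uncurry_dx3 (Dy3 f))] at hcomm

theorem dy3_dy3_dt3_comm (hf : ContDiffAt ℝ 3 ↿f (t, x, y)) :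
    Dy3 (Dy3 (Dt3 f)) t x y = Dt3 (Dy3 (Dy3 f)) t x y := by
  have hf₂ : ContDiffAt ℝ 2 ↿f (t, x, y) := hf.of_le (by norm_num)
  rw [← dy3_dt3_comm (contDiffAt_dy3 hf (by norm_num))]
  exact dy3_congr ((hf₂.eventually (by simp)).mono fun _ => dy3_dt3_comm)

theorem dy3_dy3_dx3_comm (hf : ContDiffAt ℝ 3 ↿f (t, x, y)) :
    Dy3 (Dy3 (Dx3 f)) t x y = Dx3 (Dy3 (Dy3 f)) t x y := by
  have hf₂ : ContDiffAt ℝ 2 ↿f (t, x, y) := hf.of_le (by norm_num)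
  rw [← dy3_dx3_comm (contDiffAt_dy3 hf (by norm_num))]
  exact dy3_congr ((hf₂.eventually (by simp)).mono fun _ => dy3_dx3_comm)

theorem hasDerivAt_dt3 (hf : DifferentiableAt ℝ ↿f (t, x, y)) :
    HasDerivAt (fun τ => f τ x y) (Dt3 f t x y) t :=
  DifferentiableAt.hasDerivAt <|
    hf.comp (f := fun τ : ℝ => ((τ, x, y) : ℝ × ℝ × ℝ)) t (by fun_prop)

theorem hasDerivAt_dx3 (hf : DifferentiableAt ℝ ↿f (t, x, y)) :
    HasDerivAt (fun ξ => f t ξ y) (Dx3 f t x y) x :=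
  DifferentiableAt.hasDerivAt <|
    hf.comp (f := fun ξ : ℝ => ((t, ξ, y) : ℝ × ℝ × ℝ)) x (by fun_prop)

theorem hasDerivAt_dy3 (hf : DifferentiableAt ℝ ↿f (t, x, y)) :
    HasDerivAt (fun z => f t x z) (Dy3 f t x y) y :=
  DifferentiableAt.hasDerivAt <|
    hf.comp (f := fun z : ℝ => ((t, x, z) : ℝ × ℝ × ℝ)) y (by fun_prop)

theorem dx3_mul (hf : DifferentiableAt ℝ ↿f (t, x, y)) (hg : DifferentiableAt ℝ ↿g (t, x, y)) :
    Dx3 (fun a b c => f a b c * g a b c) t x y =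
      Dx3 f t x y * g t x y + f t x y * Dx3 g t x y :=
  ((hasDerivAt_dx3 hf).mul (hasDerivAt_dx3 hg)).deriv

theorem dy3_mul (hf : DifferentiableAt ℝ ↿f (t, x, y)) (hg : DifferentiableAt ℝ ↿g (t, x, y)) :
    Dy3 (fun a b c => f a b c * g a b c) t x y =
      Dy3 f t x y * g t x y + f t x y * Dy3 g t x y :=
  ((hasDerivAt_dy3 hf).mul (hasDerivAt_dy3 hg)).deriv

theorem dy3_dy3_mul (hf : ContDiffAt ℝ 2 ↿f (t, x, y)) (hg : ContDiffAt ℝ 2 ↿g (t, x, y)) :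
    Dy3 (Dy3 fun a b c => f a b c * g a b c) t x y =
      Dy3 (Dy3 f) t x y * g t x y + 2 * (Dy3 f t x y * Dy3 g t x y)
        + f t x y * Dy3 (Dy3 g) t x y := by
  have hleibniz : ↿(Dy3 fun a b c => f a b c * g a b c) =ᶠ[𝓝 (t, x, y)]
      ↿(fun a b c => Dy3 f a b c * g a b c + f a b c * Dy3 g a b c) := by
    filter_upwards [hf.eventually (by simp), hg.eventually (by simp)] with p hfp hgp
    exact dy3_mul (hfp.differentiableAt two_ne_zero) (hgp.differentiableAt two_ne_zero)
  have hf' := hasDerivAt_dy3 (hf.differentiableAt two_ne_zero)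
  have hg' := hasDerivAt_dy3 (hg.differentiableAt two_ne_zero)
  have hf'' := hasDerivAt_dy3
    ((contDiffAt_dy3 (m := 1) hf (by norm_num)).differentiableAt one_ne_zero)
  have hg'' := hasDerivAt_dy3
    ((contDiffAt_dy3 (m := 1) hg (by norm_num)).differentiableAt one_ne_zero)
  rw [dy3_congr hleibniz]
  refine ((hf''.mul hg').add (hf'.mul hg'')).deriv.trans ?_
  ring

end PartialDerivatives

section TransportDiffusion

open Filter Topology

/-- The tangential transport operator `∂ₜ + a ∂ₓ`. It only differentiates along the surfaces
`y = const`, so it may be applied to identities known on the boundary alone. -/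
noncomputable def tangentialDeriv (a f : ℝ → ℝ → ℝ → ℝ) : ℝ → ℝ → ℝ → ℝ :=
  fun t x y => Dt3 f t x y + a t x y * Dx3 f t x y

/-- The transport-diffusion operator `∂ₜ + a ∂ₓ + b ∂_y - ∂_y∂_y`, the principal part of the
linearized Prandtl equation around the velocity field `(a, b)`. -/
noncomputable def transportDiffusion (a b f : ℝ → ℝ → ℝ → ℝ) : ℝ → ℝ → ℝ → ℝ :=
  fun t x y => tangentialDeriv a f t x y + b t x y * Dy3 f t x y - Dy3 (Dy3 f) t x y

variable {a b f g : ℝ → ℝ → ℝ → ℝ} {t x y β : ℝ}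

theorem tangentialDeriv_congr (h : ∀ τ ξ, f τ ξ y = g τ ξ y) :
    tangentialDeriv a f t x y = tangentialDeriv a g t x y := by
  simp only [tangentialDeriv, Dt3, Dx3, h]

theorem tangentialDeriv_const_sub :
    tangentialDeriv a (fun t x y => β - f t x y) t x y = -tangentialDeriv a f t x y := by
  simp only [tangentialDeriv, Dt3, Dx3, deriv_const_sub]
  ring

theorem tangentialDeriv_mul (hf : DifferentiableAt ℝ ↿f (t, x, y))
    (hg : DifferentiableAt ℝ ↿g (t, x, y)) :
    tangentialDeriv a (fun t x y => f t x y * g t x y) t x y =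
      tangentialDeriv a f t x y * g t x y + f t x y * tangentialDeriv a g t x y := by
  have ht : Dt3 (fun t x y => f t x y * g t x y) t x y = _ :=
    ((hasDerivAt_dt3 hf).mul (hasDerivAt_dt3 hg)).deriv
  rw [tangentialDeriv, ht, dx3_mul hf hg, tangentialDeriv, tangentialDeriv]
  ring

theorem tangentialDeriv_div (hf : DifferentiableAt ℝ ↿f (t, x, y))
    (hg : DifferentiableAt ℝ ↿g (t, x, y)) (hg₀ : g t x y ≠ 0) :
    tangentialDeriv a (fun t x y => f t x y / g t x y) t x y =
      (tangentialDeriv a f t x y - f t x y / g t x y * tangentialDeriv a g t x y) / g t x y := by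
  have ht : Dt3 (fun t x y => f t x y / g t x y) t x y = _ :=
    ((hasDerivAt_dt3 hf).div (hasDerivAt_dt3 hg) hg₀).deriv
  have hx : Dx3 (fun t x y => f t x y / g t x y) t x y = _ :=
    ((hasDerivAt_dx3 hf).div (hasDerivAt_dx3 hg) hg₀).deriv
  rw [tangentialDeriv, ht, hx, tangentialDeriv, tangentialDeriv]
  field

theorem tangentialDeriv_dy3_dy3_div_dy3 (hf : ContDiffAt ℝ 3 ↿f (t, x, y))
    (hf₀ : Dy3 f t x y ≠ 0) :
    tangentialDeriv a (fun t x y => Dy3 (Dy3 f) t x y / Dy3 f t x y) t x y =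
      (Dy3 (Dy3 (Dt3 f)) t x y + a t x y * Dy3 (Dy3 (Dx3 f)) t x y
        - Dy3 (Dy3 f) t x y / Dy3 f t x y *
          (Dy3 (Dt3 f) t x y + a t x y * Dy3 (Dx3 f) t x y)) / Dy3 f t x y := by
  have hf₂ : ContDiffAt ℝ 2 ↿f (t, x, y) := hf.of_le (by norm_num)
  have hf' : ContDiffAt ℝ 2 ↿(Dy3 f) (t, x, y) := contDiffAt_dy3 hf (by norm_num)
  have hf'' : ContDiffAt ℝ 1 ↿(Dy3 (Dy3 f)) (t, x, y) := contDiffAt_dy3 hf' (by norm_num)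
  rw [tangentialDeriv_div (hf''.differentiableAt one_ne_zero) (hf'.differentiableAt two_ne_zero)
    hf₀, dy3_dy3_dt3_comm hf, dy3_dy3_dx3_comm hf, dy3_dt3_comm hf₂, dy3_dx3_comm hf₂]
  rfl

theorem transportDiffusion_congr (h : ↿f =ᶠ[𝓝 (t, x, y)] ↿g) :
    transportDiffusion a b f t x y = transportDiffusion a b g t x y := by
  simp only [transportDiffusion, tangentialDeriv, dt3_congr h, dx3_congr h, dy3_congr h,
    dy3_congr (dy3_eventuallyEq h)]

theorem transportDiffusion_mul (hf : ContDiffAt ℝ 2 ↿f (t, x, y))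
    (hg : ContDiffAt ℝ 2 ↿g (t, x, y)) :
    transportDiffusion a b (fun t x y => f t x y * g t x y) t x y =
      transportDiffusion a b f t x y * g t x y + f t x y * transportDiffusion a b g t x y
        - 2 * (Dy3 f t x y * Dy3 g t x y) := by
  have hfd := hf.differentiableAt two_ne_zero
  have hgd := hg.differentiableAt two_ne_zero
  simp only [transportDiffusion, tangentialDeriv_mul hfd hgd, dy3_mul hfd hgd, dy3_dy3_mul hf hg]
  ring

theorem transportDiffusion_div (hf : ContDiffAt ℝ 2 ↿f (t, x, y))
    (hg : ContDiffAt ℝ 2 ↿g (t, x, y)) (hg₀ : g t x y ≠ 0) :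
    transportDiffusion a b (fun t x y => f t x y / g t x y) t x y =
      (transportDiffusion a b f t x y - f t x y / g t x y * transportDiffusion a b g t x y
        + 2 * (Dy3 (fun t x y => f t x y / g t x y) t x y * Dy3 g t x y)) / g t x y := by
  have hcancel : ↿f =ᶠ[𝓝 (t, x, y)] ↿(fun t x y => f t x y / g t x y * g t x y) := by
    filter_upwards [hg.continuousAt.eventually_ne hg₀] with p hp
    exact (div_mul_cancel₀ _ hp).symm
  rw [transportDiffusion_congr hcancel, transportDiffusion_mul (hf.div hg hg₀) hg]
  field

theorem dy3_div_of_robin (hf : DifferentiableAt ℝ ↿f (t, x, y))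
    (hg : DifferentiableAt ℝ ↿g (t, x, y)) (hg₀ : g t x y ≠ 0)
    (hrobin : Dy3 f t x y = β * f t x y) :
    Dy3 (fun t x y => f t x y / g t x y) t x y =
      f t x y / g t x y * (β - Dy3 g t x y / g t x y) := by
  have hy : Dy3 (fun t x y => f t x y / g t x y) t x y = _ :=
    ((hasDerivAt_dy3 hf).div (hasDerivAt_dy3 hg) hg₀).deriv
  rw [hy, hrobin]
  field

theorem transportDiffusion_div_of_eq {c d s : ℝ} (hf : ContDiffAt ℝ 2 ↿f (t, x, y))
    (hg : ContDiffAt ℝ 2 ↿g (t, x, y)) (hg₀ : g t x y ≠ 0)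
    (heq : transportDiffusion a b f t x y + f t x y * c + d * g t x y = s) :
    transportDiffusion a b (fun t x y => f t x y / g t x y) t x y + f t x y / g t x y * c + d
        + transportDiffusion a b g t x y / g t x y * (f t x y / g t x y) =
      2 * (Dy3 g t x y / g t x y) * Dy3 (fun t x y => f t x y / g t x y) t x y + s / g t x y := by
  rw [transportDiffusion_div hf hg hg₀, ← heq]
  field

theorem tangentialDeriv_dy3_div_of_robin
    (hf : ∀ τ ξ, DifferentiableAt ℝ ↿f (τ, ξ, y)) (hg : ∀ τ ξ, DifferentiableAt ℝ ↿g (τ, ξ, y))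
    (hg' : DifferentiableAt ℝ ↿(Dy3 g) (t, x, y)) (hg₀ : ∀ τ ξ, g τ ξ y ≠ 0)
    (hrobin : ∀ τ ξ, Dy3 f τ ξ y = β * f τ ξ y) :
    tangentialDeriv a (Dy3 fun t x y => f t x y / g t x y) t x y =
      tangentialDeriv a (fun t x y => f t x y / g t x y) t x y * (β - Dy3 g t x y / g t x y)
        - f t x y / g t x y * tangentialDeriv a (fun t x y => Dy3 g t x y / g t x y) t x y := by
  have hinv : DifferentiableAt ℝ (fun p => (↿g p)⁻¹) (t, x, y) := (hg t x).fun_inv (hg₀ t x)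
  have hquot : DifferentiableAt ℝ ↿(fun t x y => f t x y / g t x y) (t, x, y) :=
    (hf t x).mul hinv
  have hcoef : DifferentiableAt ℝ ↿(fun t x y => β - Dy3 g t x y / g t x y) (t, x, y) :=
    (hg'.mul hinv).const_sub β
  have hboundary : tangentialDeriv a (Dy3 fun t x y => f t x y / g t x y) t x y =
      tangentialDeriv a (fun t x y => f t x y / g t x y * (β - Dy3 g t x y / g t x y)) t x y :=
    tangentialDeriv_congr fun τ ξ => dy3_div_of_robin (hf τ ξ) (hg τ ξ) (hg₀ τ ξ) (hrobin τ ξ)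
  rw [hboundary, tangentialDeriv_mul hquot hcoef, tangentialDeriv_const_sub]
  ring

end TransportDiffusion

theorem linearized_prandtl_boundary_equation_general
    {β : ℝ} {u v ub vb f w η ft ζ zt : ℝ → ℝ → ℝ → ℝ}
    (hu : ∀ t x : ℝ, ContDiffAt ℝ 2 ↿u (t, x, 0))
    (hub : ∀ t x : ℝ, ContDiffAt ℝ 3 ↿ub (t, x, 0))
    (hub₀ : ∀ t x : ℝ, Dy3 ub t x 0 ≠ 0)
    (heq : ∀ t x : ℝ,
      Dt3 u t x 0 + ub t x 0 * Dx3 u t x 0 + vb t x 0 * Dy3 u t x 0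
        + u t x 0 * Dx3 ub t x 0 + v t x 0 * Dy3 ub t x 0 - Dy3 (Dy3 u) t x 0 = f t x 0)
    (hw : ∀ t x y : ℝ, w t x y = Dy3 (fun a b c => u a b c / Dy3 ub a b c) t x y)
    (hη : ∀ t x y : ℝ, η t x y = Dy3 (Dy3 ub) t x y / Dy3 ub t x y)
    (hft : ∀ t x y : ℝ, ft t x y = f t x y / Dy3 ub t x y)
    (hζ : ∀ t x y : ℝ, ζ t x y =
      (Dt3 (Dy3 ub) t x y + ub t x y * Dx3 (Dy3 ub) t x y
        + vb t x y * Dy3 (Dy3 ub) t x y - Dy3 (Dy3 (Dy3 ub)) t x y) / Dy3 ub t x y)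
    (hzt : ∀ t x y : ℝ, zt t x y =
      (Dy3 (Dy3 (Dt3 ub)) t x y + ub t x y * Dy3 (Dy3 (Dx3 ub)) t x y
        - η t x y * (Dy3 (Dt3 ub) t x y + ub t x y * Dy3 (Dx3 ub) t x y)) / Dy3 ub t x y)
    (hvbc : ∀ t x : ℝ, v t x 0 = 0)
    (hvbbc : ∀ t x : ℝ, vb t x 0 = 0)
    (hrobin : ∀ t x : ℝ, Dy3 u t x 0 = β * u t x 0)
    (hηbc : ∀ t x : ℝ, β - η t x 0 ≠ 0) :
    (∀ t x : ℝ, w t x 0 = (u t x 0 / Dy3 ub t x 0) * (β - η t x 0)) ∧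
    (∀ t x : ℝ,
      Dt3 w t x 0 + Dx3 (fun a b c => ub a b c * w a b c) t x 0
        - (β - η t x 0) * (Dy3 w t x 0 + 2 * η t x 0 * w t x 0 + ft t x 0)
        + ζ t x 0 * w t x 0 + (zt t x 0 / (β - η t x 0)) * w t x 0 = 0) := by
  set q : ℝ → ℝ → ℝ → ℝ := fun t x y => u t x y / Dy3 ub t x y
  obtain rfl : w = Dy3 q := by funext t x y; exact hw t x y
  have hg t x : ContDiffAt ℝ 2 ↿(Dy3 ub) (t, x, 0) := contDiffAt_dy3 (hub t x) (by norm_num)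
  have hu_diff t x := (hu t x).differentiableAt two_ne_zero
  have hg_diff t x := (hg t x).differentiableAt two_ne_zero
  have hw_robin t x : Dy3 q t x 0 = q t x 0 * (β - η t x 0) := by
    rw [hη]
    exact dy3_div_of_robin (hu_diff t x) (hg_diff t x) (hub₀ t x) (hrobin t x)
  refine ⟨hw_robin, fun t x => ?_⟩
  have hq_eq : tangentialDeriv ub q t x 0 + q t x 0 * Dx3 ub t x 0 + ζ t x 0 * q t x 0 =
      Dy3 (Dy3 q) t x 0 + 2 * η t x 0 * Dy3 q t x 0 + ft t x 0 := by
    have hζ₀ : ζ t x 0 = transportDiffusion ub vb (Dy3 ub) t x 0 / Dy3 ub t x 0 := hζ t x 0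
    have hquot := transportDiffusion_div_of_eq (a := ub) (b := vb) (hu t x) (hg t x) (hub₀ t x)
      (c := Dx3 ub t x 0) (d := v t x 0) (s := f t x 0)
      (by rw [← heq t x, transportDiffusion, tangentialDeriv]; ring)
    rw [← hζ₀, ← hη, ← hft, transportDiffusion, hvbc, hvbbc] at hquot
    linear_combination hquot
  have hw_transport : tangentialDeriv ub (Dy3 q) t x 0 =
      tangentialDeriv ub q t x 0 * (β - η t x 0) - q t x 0 * zt t x 0 := by
    have hg' : ContDiffAt ℝ 1 ↿(Dy3 (Dy3 ub)) (t, x, 0) := contDiffAt_dy3 (hg t x) (by norm_num)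
    rw [hzt, hη, ← tangentialDeriv_dy3_dy3_div_dy3 (hub t x) (hub₀ t x)]
    exact tangentialDeriv_dy3_div_of_robin hu_diff hg_diff (hg'.differentiableAt one_ne_zero)
      hub₀ hrobin
  have hzt_mul : zt t x 0 / (β - η t x 0) * Dy3 q t x 0 = q t x 0 * zt t x 0 := by
    rw [hw_robin]
    field [hηbc t x]
  have hw_C1 : ContDiffAt ℝ 1 ↿(Dy3 q) (t, x, 0) :=
    contDiffAt_dy3 ((hu t x).div (hg t x) (hub₀ t x)) (by norm_num)
  rw [dx3_mul ((hub t x).differentiableAt three_ne_zero) (hw_C1.differentiableAt one_ne_zero)]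
  rw [tangentialDeriv] at hw_transport
  linear_combination hw_transport + (β - η t x 0) * hq_eq + hzt_mul
    + (Dx3 ub t x 0 + ζ t x 0) * hw_robin t x

/-- Boundary part of Lemma 3.1: for the linearized Prandtl-type
equation with Robin boundary condition `∂_y u = βu` at `y = 0`, with
`w := ∂_y(u/∂_y ub)`, one has at `y = 0`:
(i) `w = (u/∂_y ub)(β − η)`, and
(ii) `∂ₜw + ∂ₓ(ub·w) − (β − η)(∂_y w + 2ηw + f̃) + ζw + (ζ̃/(β−η))w = 0`. -/
theorem linearized_prandtl_boundary_equation
    (β : ℝ) (hβ : 0 < β)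
    (u v ub vb f : ℝ → ℝ → ℝ → ℝ)
    (hsm_u : ContDiff ℝ (⊤ : ℕ∞) (fun p : ℝ × ℝ × ℝ => u p.1 p.2.1 p.2.2))
    (hsm_v : ContDiff ℝ (⊤ : ℕ∞) (fun p : ℝ × ℝ × ℝ => v p.1 p.2.1 p.2.2))
    (hsm_ub : ContDiff ℝ (⊤ : ℕ∞) (fun p : ℝ × ℝ × ℝ => ub p.1 p.2.1 p.2.2))
    (hsm_vb : ContDiff ℝ (⊤ : ℕ∞) (fun p : ℝ × ℝ × ℝ => vb p.1 p.2.1 p.2.2))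
    (hsm_f : ContDiff ℝ (⊤ : ℕ∞) (fun p : ℝ × ℝ × ℝ => f p.1 p.2.1 p.2.2))
    (hmono : ∀ t x y : ℝ, 0 < Dy3 ub t x y)
    (heq : ∀ t x y : ℝ,
      Dt3 u t x y + ub t x y * Dx3 u t x y + vb t x y * Dy3 u t x y
        + u t x y * Dx3 ub t x y + v t x y * Dy3 ub t x y - Dy3 (Dy3 u) t x y = f t x y)
    (w η ft ζ zt : ℝ → ℝ → ℝ → ℝ)
    (hw : ∀ t x y : ℝ, w t x y = Dy3 (fun a b c => u a b c / Dy3 ub a b c) t x y)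
    (hη : ∀ t x y : ℝ, η t x y = Dy3 (Dy3 ub) t x y / Dy3 ub t x y)
    (hft : ∀ t x y : ℝ, ft t x y = f t x y / Dy3 ub t x y)
    (hζ : ∀ t x y : ℝ, ζ t x y =
      (Dt3 (Dy3 ub) t x y + ub t x y * Dx3 (Dy3 ub) t x y
        + vb t x y * Dy3 (Dy3 ub) t x y - Dy3 (Dy3 (Dy3 ub)) t x y) / Dy3 ub t x y)
    (hzt : ∀ t x y : ℝ, zt t x y =
      (Dy3 (Dy3 (Dt3 ub)) t x y + ub t x y * Dy3 (Dy3 (Dx3 ub)) t x y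
        - η t x y * (Dy3 (Dt3 ub) t x y + ub t x y * Dy3 (Dx3 ub) t x y)) / Dy3 ub t x y)
    (hvbc : ∀ t x : ℝ, v t x 0 = 0)
    (hvbbc : ∀ t x : ℝ, vb t x 0 = 0)
    (hrobin : ∀ t x : ℝ, Dy3 u t x 0 = β * u t x 0)
    (hηbc : ∀ t x : ℝ, 0 < β - η t x 0) :
    (∀ t x : ℝ, w t x 0 = (u t x 0 / Dy3 ub t x 0) * (β - η t x 0)) ∧
    (∀ t x : ℝ,
      Dt3 w t x 0 + Dx3 (fun a b c => ub a b c * w a b c) t x 0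
        - (β - η t x 0) * (Dy3 w t x 0 + 2 * η t x 0 * w t x 0 + ft t x 0)
        + ζ t x 0 * w t x 0 + (zt t x 0 / (β - η t x 0)) * w t x 0 = 0) :=
  linearized_prandtl_boundary_equation_general
    (fun _ _ => (contDiff_infty.1 hsm_u 2).contDiffAt)
    (fun _ _ => (contDiff_infty.1 hsm_ub 3).contDiffAt)
    (fun t x => (hmono t x 0).ne') (fun t x => heq t x 0) hw hη hft hζ hzt
    hvbc hvbbc hrobin fun t x => (hηbc t x).ne'
end
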